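/- Let d ≥ 3 and let X₁,…,X_N and Y₁,…,Y_N be 2N independent random points uniformly distributed in [0,1]^d, with L_N = L_MBM(X₁,…,X_N; Y₁,…,Y_N). If E(L_N)/N^{1-1/d} converges to a constant β as N → ∞, then (with the X_i, Y_i coming from two infinite i.i.d. uniform sequences) L_N/N^{1-1/d} → β almost surely as N → ∞. -/

import Mathlib

open MeasureTheory ProbabilityTheory Filter

noncomputable section

/-- The unit cube `[0,1]^d` in Euclidean space `ℝ^d`. -/
def unitCube (d : ℕ) : Set (EuclideanSpace ℝ (Fin d)) :=
  {x | ∀ i, x i ∈ Set.Icc (0 : ℝ) 1}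

/-- The uniform probability measure on the unit cube `[0,1]^d`
(the cube has Lebesgue measure one, so the restriction of Lebesgue measure
to the cube is the uniform probability measure on it). -/
def unifCube (d : ℕ) : Measure (EuclideanSpace ℝ (Fin d)) :=
  volume.restrict (unitCube d)

/-- `LMBMon X Y A B` is the minimum total Euclidean length of a partial bipartite
matching pairing `min A.card B.card` of the points `X j, j ∈ A` with as many of the
points `Y j, j ∈ B`, each pair consisting of one `X`-point and one `Y`-point. -/
def LMBMon {d N₁ N₂ : ℕ} (X : Fin N₁ → EuclideanSpace ℝ (Fin d))
    (Y : Fin N₂ → EuclideanSpace ℝ (Fin d)) (A : Finset (Fin N₁)) (B : Finset (Fin N₂)) : ℝ :=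
  sInf { s | ∃ (σ : Fin (min A.card B.card) ↪ Fin N₁) (τ : Fin (min A.card B.card) ↪ Fin N₂),
    (∀ i, σ i ∈ A) ∧ (∀ i, τ i ∈ B) ∧ s = ∑ i, dist (X (σ i)) (Y (τ i)) }

/-- `LMBM X Y` : the minimum total Euclidean length of a bipartite matching between the
points of `X` and the points of `Y`; if the two families have different cardinalities
`N₁ ≠ N₂`, it is the minimum length of a partial matching pairing `min N₁ N₂` points of
each family, leaving `|N₁ - N₂|` points unmatched. -/
def LMBM {d N₁ N₂ : ℕ} (X : Fin N₁ → EuclideanSpace ℝ (Fin d))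
    (Y : Fin N₂ → EuclideanSpace ℝ (Fin d)) : ℝ :=
  LMBMon X Y Finset.univ Finset.univ

/-- `MP d lam`: the expected length of a minimum bipartite matching in the Poissonized
model on `[0,1]^d` with intensity `lam`: the numbers `n₁, n₂` of points of the two
families are independent Poisson(lam) variables and the points are i.i.d. uniform
on the cube. -/
def MP (d : ℕ) (lam : ℝ) : ℝ :=
  ∑' n₁ : ℕ, ∑' n₂ : ℕ,
    (Real.exp (-lam) * lam ^ n₁ / n₁.factorial) *
      ((Real.exp (-lam) * lam ^ n₂ / n₂.factorial) *
        ∫ p : (Fin n₁ → EuclideanSpace ℝ (Fin d)) × (Fin n₂ → EuclideanSpace ℝ (Fin d)),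
          LMBM p.1 p.2 ∂ ((Measure.pi fun _ => unifCube d).prod (Measure.pi fun _ => unifCube d)))

end

/-!
Moving one of the `2 * N` points within a set of diameter `c` changes the length of an optimal
matching by at most `c`, so by McDiarmid's inequality `L_N - E L_N` is sub-Gaussian with variance
proxy `N * c ^ 2 / 2`. Its tail at scale `ε * N ^ α` is then at most
`2 * exp (-(ε ^ 2 / c ^ 2) * N ^ (2 * α - 1))`, which is summable in `N` as soon as `1 / 2 < α`, and
Borel–Cantelli gives almost sure convergence.

McDiarmid's inequality is obtained by induction on the number of coordinates: given the first
coordinate, the conditional mean and the fluctuation around it are both sub-Gaussian, the former by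
Hoeffding's lemma, and their variance proxies add up.
-/

section BoundedDifferences

open scoped NNReal

variable {ι : Type*} {E : ι → Type*} {s : ∀ i, Set (E i)} {c : ι → ℝ≥0} {f : (∀ i, E i) → ℝ}

/-- The bounded difference condition of McDiarmid's inequality: inside the box `∏ i, s i`, changing
the `i`-th coordinate changes `f` by at most `c i`. The box accommodates points that are only almost
surely bounded. -/
def HasBoundedDifferencesOn [DecidableEq ι] (f : (∀ i, E i) → ℝ) (s : ∀ i, Set (E i))
    (c : ι → ℝ≥0) : Prop :=
  ∀ z ∈ Set.univ.pi s, ∀ i, ∀ x ∈ s i, |f (Function.update z i x) - f z| ≤ c i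

lemma ae_mem_univ_pi [Fintype ι] [∀ i, MeasurableSpace (E i)] {μ : ∀ i, Measure (E i)}
    [∀ i, SigmaFinite (μ i)] (hs : ∀ i, ∀ᵐ x ∂μ i, x ∈ s i) :
    ∀ᵐ z ∂Measure.pi μ, z ∈ Set.univ.pi s := by
  filter_upwards [ae_all_iff.2 fun i ↦ Measure.tendsto_eval_ae_ae.eventually (hs i)]
    with z hz i _ using hz i

namespace HasBoundedDifferencesOn

variable [DecidableEq ι]

lemma abs_sub_le_sum [Fintype ι] (h : HasBoundedDifferencesOn f s c) {z w : ∀ i, E i}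
    (hz : z ∈ Set.univ.pi s) (hw : w ∈ Set.univ.pi s) : |f z - f w| ≤ ∑ i, (c i : ℝ) := by
  suffices ∀ t : Finset ι, |f (t.piecewise z w) - f w| ≤ ∑ i ∈ t, (c i : ℝ) by
    simpa using this Finset.univ
  intro t
  induction t using Finset.induction_on with
  | empty => simp
  | insert i t hi ih =>
    have hbox : t.piecewise z w ∈ Set.univ.pi s := fun j _ ↦ by
      by_cases hj : j ∈ t <;> simp [hj, hz j trivial, hw j trivial]
    rw [Finset.piecewise_insert, Finset.sum_insert hi]
    exact (abs_sub_le _ _ _).trans (add_le_add (h _ hbox i _ (hz i trivial)) ih)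

lemma comp_piCongrLeft {κ : Type*} [DecidableEq κ] (h : HasBoundedDifferencesOn f s c)
    (e : κ ≃ ι) :
    HasBoundedDifferencesOn (fun z ↦ f (Equiv.piCongrLeft E e z)) (fun k ↦ s (e k))
      (fun k ↦ c (e k)) := by
  intro z hz k x hx
  have hupdate : Equiv.piCongrLeft E e (Function.update z k x)
      = Function.update (Equiv.piCongrLeft E e z) (e k) x := by
    ext i
    obtain ⟨k', rfl⟩ := e.surjective i
    rcases eq_or_ne k' k with rfl | hk
    · simp
    · simp [hk]
  simp only [hupdate]
  refine h _ (fun i _ ↦ ?_) _ _ hx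
  obtain ⟨k', rfl⟩ := e.surjective i
  simpa using hz k' trivial

variable [Fintype ι] [∀ i, MeasurableSpace (E i)] {μ : ∀ i, Measure (E i)}
  [∀ i, IsProbabilityMeasure (μ i)]

lemma integrable (h : HasBoundedDifferencesOn f s c) (hf : AEStronglyMeasurable f (Measure.pi μ))
    (hs : ∀ i, ∀ᵐ x ∂μ i, x ∈ s i) : Integrable f (Measure.pi μ) := by
  obtain ⟨w, hw⟩ := (ae_mem_univ_pi hs).exists
  refine .of_bound hf (|f w| + ∑ i, (c i : ℝ)) ?_
  filter_upwards [ae_mem_univ_pi hs] with z hz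
  linarith [h.abs_sub_le_sum hz hw, abs_sub_abs_le_abs_sub (f z) (f w), Real.norm_eq_abs (f z)]

end HasBoundedDifferencesOn

section Cons

variable {n : ℕ} {E : Fin (n + 1) → Type*} {s : ∀ i, Set (E i)} {c : Fin (n + 1) → ℝ≥0}
  {f : (∀ i, E i) → ℝ}

lemma cons_mem_univ_pi {x : E 0} {y : ∀ i : Fin n, E i.succ} (hx : x ∈ s 0)
    (hy : y ∈ Set.univ.pi fun i : Fin n ↦ s i.succ) :
    (Fin.cons x y : ∀ i, E i) ∈ Set.univ.pi s :=
  fun i _ ↦ Fin.cases hx (fun j ↦ hy j trivial) i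

lemma HasBoundedDifferencesOn.tail (h : HasBoundedDifferencesOn f s c) {x : E 0} (hx : x ∈ s 0) :
    HasBoundedDifferencesOn (fun y ↦ f (Fin.cons x y)) (fun i : Fin n ↦ s i.succ)
      (fun i ↦ c i.succ) := by
  intro y hy i x' hx'
  simpa only [Fin.cons_update] using h _ (cons_mem_univ_pi hx hy) i.succ x' hx'

lemma HasBoundedDifferencesOn.abs_cons_sub_cons_le (h : HasBoundedDifferencesOn f s c)
    {x x' : E 0} (hx : x ∈ s 0) (hx' : x' ∈ s 0) {y : ∀ i : Fin n, E i.succ}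
    (hy : y ∈ Set.univ.pi fun i : Fin n ↦ s i.succ) :
    |f (Fin.cons x y) - f (Fin.cons x' y)| ≤ c 0 := by
  simpa only [Fin.update_cons_zero] using h _ (cons_mem_univ_pi hx' hy) 0 x hx

end Cons

end BoundedDifferences

section McDiarmid

open scoped NNReal

lemma hasSubgaussianMGF_sub_integral_of_abs_sub_le {Ω : Type*} [MeasurableSpace Ω] {μ : Measure Ω}
    [IsProbabilityMeasure μ] {X : Ω → ℝ} {S : Set Ω} {c : ℝ≥0} (hX : AEMeasurable X μ)
    (hS : ∀ᵐ ω ∂μ, ω ∈ S) (h : ∀ ω ∈ S, ∀ ω' ∈ S, |X ω - X ω'| ≤ c) :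
    HasSubgaussianMGF (fun ω ↦ X ω - μ[X]) ((c / 2) ^ 2) μ := by
  have hlower {ω} (hω : ω ∈ S) : X ω - c ∈ lowerBounds (X '' S) := by
    rintro _ ⟨ω', hω', rfl⟩
    linarith [(abs_le.1 (h ω hω ω' hω')).2]
  have hrange : ∀ᵐ ω ∂μ, X ω ∈ Set.Icc (sInf (X '' S)) (sInf (X '' S) + c) := by
    filter_upwards [hS] with ω hω
    have hmem : X ω ∈ X '' S := ⟨ω, hω, rfl⟩
    exact ⟨csInf_le ⟨_, hlower hω⟩ hmem, by linarith [le_csInf ⟨_, hmem⟩ (hlower hω)]⟩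
  simpa using hasSubgaussianMGF_of_mem_Icc hX hrange

lemma hasSubgaussianMGF_prod {E F : Type*} [MeasurableSpace E] [MeasurableSpace F]
    {μ : Measure E} {ν : Measure F} [SFinite μ] [SFinite ν] {f : E × F → ℝ} {g : E → ℝ}
    {c₁ c₂ : ℝ≥0} (hf : AEMeasurable f (μ.prod ν)) (hg : HasSubgaussianMGF g c₁ μ)
    (hfg : ∀ᵐ x ∂μ, HasSubgaussianMGF (fun y ↦ f (x, y) - g x) c₂ ν) :
    HasSubgaussianMGF f (c₁ + c₂) (μ.prod ν) := by
  have hexp (t : ℝ) (x : E) (y : F) :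
      Real.exp (t * f (x, y)) = Real.exp (t * g x) * Real.exp (t * (f (x, y) - g x)) := by
    rw [← Real.exp_add]
    ring_nf
  have hfiber (t : ℝ) : ∀ᵐ x ∂μ, ∫ y, Real.exp (t * f (x, y)) ∂ν
      ≤ Real.exp (t * g x) * Real.exp (c₂ * t ^ 2 / 2) := by
    filter_upwards [hfg] with x hx
    simp only [hexp t x, integral_const_mul]
    gcongr
    exact hx.mgf_le t
  have hint (t : ℝ) : Integrable (fun p ↦ Real.exp (t * f p)) (μ.prod ν) := by
    have hmeas : AEStronglyMeasurable (fun p ↦ Real.exp (t * f p)) (μ.prod ν) :=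
      (hf.const_mul t).exp.aestronglyMeasurable
    refine (integrable_prod_iff hmeas).2 ⟨?_, ?_⟩
    · filter_upwards [hfg] with x hx
      simp only [hexp t x]
      exact (hx.integrable_exp_mul t).const_mul _
    · refine ((hg.integrable_exp_mul t).mul_const (Real.exp (c₂ * t ^ 2 / 2))).mono'
        hmeas.norm.integral_prod_right' ?_
      filter_upwards [hfiber t] with x hx
      rw [Real.norm_of_nonneg (integral_nonneg fun _ ↦ norm_nonneg _)]
      simpa only [Real.norm_eq_abs, Real.abs_exp] using hx
  refine ⟨hint, fun t ↦ ?_⟩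
  calc mgf f (μ.prod ν) t
      = ∫ x, ∫ y, Real.exp (t * f (x, y)) ∂ν ∂μ := integral_prod _ (hint t)
    _ ≤ ∫ x, Real.exp (t * g x) * Real.exp (c₂ * t ^ 2 / 2) ∂μ :=
        integral_mono_ae (hint t).integral_prod_left
          ((hg.integrable_exp_mul t).mul_const _) (hfiber t)
    _ = mgf g μ t * Real.exp (c₂ * t ^ 2 / 2) := integral_mul_const _ _
    _ ≤ Real.exp (c₁ * t ^ 2 / 2) * Real.exp (c₂ * t ^ 2 / 2) := by gcongr; exact hg.mgf_le t
    _ = Real.exp ((c₁ + c₂ : ℝ≥0) * t ^ 2 / 2) := by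
        rw [← Real.exp_add, NNReal.coe_add]
        ring_nf

lemma hasSubgaussianMGF_of_comp_measurePreserving {Ω Ω' : Type*} [MeasurableSpace Ω]
    [MeasurableSpace Ω'] {μ : Measure Ω} {ν : Measure Ω'} {φ : Ω → Ω'} {X : Ω' → ℝ} {c : ℝ≥0}
    (hφ : MeasurePreserving φ μ ν) (hX : AEMeasurable X ν)
    (h : HasSubgaussianMGF (fun ω ↦ X (φ ω)) c μ) : HasSubgaussianMGF X c ν := by
  rw [← hφ.map_eq] at hX ⊢
  exact h.congr_identDistrib ⟨h.aemeasurable, hX,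
    (AEMeasurable.map_map_of_aemeasurable hX hφ.aemeasurable).symm⟩

section Cons

variable {n : ℕ} {E : Fin (n + 1) → Type*} [∀ i, MeasurableSpace (E i)]

lemma measurable_finCons :
    Measurable fun p : E 0 × (∀ i : Fin n, E i.succ) ↦ (Fin.cons p.1 p.2 : ∀ i, E i) :=
  measurable_pi_lambda _ <| Fin.cases measurable_fst fun i ↦
    (measurable_pi_apply i).comp measurable_snd

lemma measurePreserving_finCons (μ : ∀ i, Measure (E i)) [∀ i, SigmaFinite (μ i)] :
    MeasurePreserving (fun p : E 0 × (∀ i : Fin n, E i.succ) ↦ (Fin.cons p.1 p.2 : ∀ i, E i))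
      ((μ 0).prod (Measure.pi fun i ↦ μ i.succ)) (Measure.pi μ) := by
  have hcons : (fun p : E 0 × (∀ i : Fin n, E i.succ) ↦ (Fin.cons p.1 p.2 : ∀ i, E i))
      = (MeasurableEquiv.piFinSuccAbove E 0).symm :=
    funext fun p ↦ (Fin.insertNth_zero p.1 p.2).symm
  rw [hcons]
  exact (measurePreserving_piFinSuccAbove μ 0).symm

lemma integral_integral_finCons {μ : ∀ i, Measure (E i)} [∀ i, SigmaFinite (μ i)]
    {f : (∀ i, E i) → ℝ} (hf : Integrable f (Measure.pi μ)) :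
    ∫ x, ∫ y, f (Fin.cons x y) ∂Measure.pi (fun i : Fin n ↦ μ i.succ) ∂μ 0
      = ∫ z, f z ∂Measure.pi μ := by
  have hcons := measurePreserving_finCons μ
  rw [← integral_prod (fun p ↦ f (Fin.cons p.1 p.2)) (hcons.integrable_comp_of_integrable hf),
    ← hcons.map_eq, integral_map hcons.aemeasurable (hcons.map_eq ▸ hf.1)]

end Cons

namespace HasBoundedDifferencesOn

lemma abs_integral_cons_sub_le {n : ℕ} {E : Fin (n + 1) → Type*} [∀ i, MeasurableSpace (E i)]
    {ν : ∀ i : Fin n, Measure (E i.succ)} [∀ i, IsProbabilityMeasure (ν i)] {s : ∀ i, Set (E i)}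
    {c : Fin (n + 1) → ℝ≥0} {f : (∀ i, E i) → ℝ} (h : HasBoundedDifferencesOn f s c)
    (hf : Measurable f) (hs : ∀ i : Fin n, ∀ᵐ y ∂ν i, y ∈ s i.succ) {x x' : E 0} (hx : x ∈ s 0)
    (hx' : x' ∈ s 0) :
    |∫ y, f (Fin.cons x y) ∂Measure.pi ν - ∫ y, f (Fin.cons x' y) ∂Measure.pi ν| ≤ c 0 := by
  have hint {x} (hx : x ∈ s 0) : Integrable (fun y ↦ f (Fin.cons x y)) (Measure.pi ν) :=
    (h.tail hx).integrable
      (hf.comp (measurable_finCons.comp measurable_prodMk_left)).aestronglyMeasurable hs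
  rw [← integral_sub (hint hx) (hint hx')]
  have hbound : ∀ᵐ y ∂Measure.pi ν, ‖f (Fin.cons x y) - f (Fin.cons x' y)‖ ≤ c 0 := by
    filter_upwards [ae_mem_univ_pi hs] with y hy using h.abs_cons_sub_cons_le hx hx' hy
  simpa using norm_integral_le_of_norm_le_const hbound

lemma hasSubgaussianMGF_pi_fin {n : ℕ} {E : Fin n → Type*} [∀ i, MeasurableSpace (E i)]
    {μ : ∀ i, Measure (E i)} [∀ i, IsProbabilityMeasure (μ i)] {s : ∀ i, Set (E i)}
    {c : Fin n → ℝ≥0} {f : (∀ i, E i) → ℝ} (h : HasBoundedDifferencesOn f s c)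
    (hf : Measurable f) (hs : ∀ i, ∀ᵐ x ∂μ i, x ∈ s i) :
    HasSubgaussianMGF (fun z ↦ f z - ∫ w, f w ∂Measure.pi μ) (∑ i, (c i / 2) ^ 2)
      (Measure.pi μ) := by
  induction n with
  | zero =>
    have hconst (z) : f z - ∫ w, f w ∂Measure.pi μ = 0 := by
      simp [Subsingleton.elim _ z]
    simp [hconst]
  | succ n ih =>
    set ν := Measure.pi fun i : Fin n ↦ μ i.succ
    set m := ∫ w, f w ∂Measure.pi μ
    let F : E 0 × (∀ i : Fin n, E i.succ) → ℝ := fun p ↦ f (Fin.cons p.1 p.2)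
    have hF : Measurable F := hf.comp measurable_finCons
    have hmean : ∫ x, ∫ y, F (x, y) ∂ν ∂μ 0 = m :=
      integral_integral_finCons (h.integrable hf.aestronglyMeasurable hs)
    have hhead : HasSubgaussianMGF (fun x ↦ ∫ y, F (x, y) ∂ν - m) ((c 0 / 2) ^ 2) (μ 0) := by
      rw [← hmean]
      exact hasSubgaussianMGF_sub_integral_of_abs_sub_le
        hF.stronglyMeasurable.integral_prod_right'.measurable.aemeasurable (hs 0)
        fun x hx x' hx' ↦ h.abs_integral_cons_sub_le hf (fun i ↦ hs i.succ) hx hx'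
    have hfiber : ∀ᵐ x ∂μ 0, HasSubgaussianMGF (fun y ↦ F (x, y) - ∫ y', F (x, y') ∂ν)
        (∑ i : Fin n, (c i.succ / 2) ^ 2) ν := by
      filter_upwards [hs 0] with x hx
      exact ih (h.tail hx) (hF.comp measurable_prodMk_left) fun i ↦ hs i.succ
    rw [Fin.sum_univ_succ]
    exact hasSubgaussianMGF_of_comp_measurePreserving (measurePreserving_finCons μ)
      (hf.sub_const m).aemeasurable <|
      hasSubgaussianMGF_prod (hF.sub_const m).aemeasurable hhead (by simpa using hfiber)

variable {ι : Type*} [Fintype ι] [DecidableEq ι] {E : ι → Type*} [∀ i, MeasurableSpace (E i)]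
  {s : ∀ i, Set (E i)} {c : ι → ℝ≥0} {f : (∀ i, E i) → ℝ}

lemma hasSubgaussianMGF_pi {μ : ∀ i, Measure (E i)} [∀ i, IsProbabilityMeasure (μ i)]
    (h : HasBoundedDifferencesOn f s c) (hf : Measurable f) (hs : ∀ i, ∀ᵐ x ∂μ i, x ∈ s i) :
    HasSubgaussianMGF (fun z ↦ f z - ∫ w, f w ∂Measure.pi μ) (∑ i, (c i / 2) ^ 2)
      (Measure.pi μ) := by
  let e := (Fintype.equivFin ι).symm
  let φ := MeasurableEquiv.piCongrLeft E e
  have hφ : MeasurePreserving φ (Measure.pi fun k ↦ μ (e k)) (Measure.pi μ) :=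
    measurePreserving_piCongrLeft μ e
  refine hasSubgaussianMGF_of_comp_measurePreserving hφ (hf.sub_const _).aemeasurable ?_
  rw [← hφ.integral_comp', ← e.sum_comp]
  exact hasSubgaussianMGF_pi_fin (h.comp_piCongrLeft e) (hf.comp φ.measurable) fun k ↦ hs (e k)

theorem hasSubgaussianMGF_of_iIndepFun {Ω : Type*} [MeasurableSpace Ω] {P : Measure Ω}
    {Z : ∀ i, Ω → E i} (h : HasBoundedDifferencesOn f s c) (hf : Measurable f)
    (hindep : iIndepFun Z P) (hZ : ∀ i, AEMeasurable (Z i) P)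
    (hs : ∀ i, ∀ᵐ x ∂P.map (Z i), x ∈ s i) :
    HasSubgaussianMGF (fun ω ↦ f (fun i ↦ Z i ω) - ∫ ω', f (fun i ↦ Z i ω') ∂P)
      (∑ i, (c i / 2) ^ 2) P := by
  have hprob := hindep.isProbabilityMeasure
  have hmarginal (i : ι) : IsProbabilityMeasure (P.map (Z i)) :=
    Measure.isProbabilityMeasure_map (hZ i)
  have hZ_pi : AEMeasurable (fun ω i ↦ Z i ω) P := aemeasurable_pi_lambda _ hZ
  have hpi := h.hasSubgaussianMGF_pi hf hs
  rw [← (iIndepFun_iff_map_fun_eq_pi_map hZ).1 hindep,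
    integral_map hZ_pi hf.aestronglyMeasurable] at hpi
  exact hpi.of_map hZ_pi

end HasBoundedDifferencesOn

end McDiarmid

section Matching

open scoped NNReal

variable {d N₁ N₂ : ℕ}

lemma LMBM_le_sum {X : Fin N₁ → EuclideanSpace ℝ (Fin d)} {Y : Fin N₂ → EuclideanSpace ℝ (Fin d)}
    (σ : Fin (min (Finset.univ : Finset (Fin N₁)).card (Finset.univ : Finset (Fin N₂)).card) ↪
      Fin N₁)
    (τ : Fin (min (Finset.univ : Finset (Fin N₁)).card (Finset.univ : Finset (Fin N₂)).card) ↪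
      Fin N₂) :
    LMBM X Y ≤ ∑ i, dist (X (σ i)) (Y (τ i)) := by
  refine csInf_le ⟨0, ?_⟩ ⟨σ, τ, by simp, by simp, rfl⟩
  rintro _ ⟨σ, τ, -, -, rfl⟩
  positivity

lemma sum_comp_embedding_le {ι κ : Type*} [Fintype ι] [Fintype κ] (σ : ι ↪ κ) {g : κ → ℝ}
    (hg : ∀ k, 0 ≤ g k) : ∑ i, g (σ i) ≤ ∑ k, g k := by
  rw [← Finset.sum_map Finset.univ σ g]
  exact Finset.sum_le_univ_sum_of_nonneg hg

variable (X X' : Fin N₁ → EuclideanSpace ℝ (Fin d)) (Y Y' : Fin N₂ → EuclideanSpace ℝ (Fin d))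

lemma LMBM_le_add_sum_dist :
    LMBM X Y ≤ LMBM X' Y' + (∑ i, dist (X i) (X' i) + ∑ j, dist (Y j) (Y' j)) := by
  rw [← sub_le_iff_le_add]
  refine le_csInf ⟨_, Fin.castLEEmb (by simp), Fin.castLEEmb (by simp), by simp, by simp, rfl⟩ ?_
  rintro _ ⟨σ, τ, -, -, rfl⟩
  rw [sub_le_iff_le_add]
  calc LMBM X Y
      ≤ ∑ i, dist (X (σ i)) (Y (τ i)) := LMBM_le_sum σ τ
    _ ≤ ∑ i, (dist (X (σ i)) (X' (σ i)) + dist (X' (σ i)) (Y' (τ i))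
          + dist (Y' (τ i)) (Y (τ i))) := by gcongr; exact dist_triangle4 _ _ _ _
    _ = ∑ i, dist (X' (σ i)) (Y' (τ i))
          + (∑ i, dist (X (σ i)) (X' (σ i)) + ∑ i, dist (Y (τ i)) (Y' (τ i))) := by
        simp only [Finset.sum_add_distrib, dist_comm (Y' _)]
        ring
    _ ≤ _ := by
        gcongr
        · exact sum_comp_embedding_le σ fun i ↦ dist_nonneg (x := X i) (y := X' i)
        · exact sum_comp_embedding_le τ fun j ↦ dist_nonneg (x := Y j) (y := Y' j)

lemma abs_LMBM_sub_LMBM_le :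
    |LMBM X Y - LMBM X' Y'| ≤ ∑ i, dist (X i) (X' i) + ∑ j, dist (Y j) (Y' j) := by
  have h := LMBM_le_add_sum_dist X X' Y Y'
  have h' := LMBM_le_add_sum_dist X' X Y' Y
  simp only [dist_comm (X' _), dist_comm (Y' _)] at h'
  exact abs_le.2 ⟨by linarith, by linarith⟩

lemma continuous_LMBM :
    Continuous fun p : (Fin N₁ → EuclideanSpace ℝ (Fin d)) × (Fin N₂ → EuclideanSpace ℝ (Fin d)) ↦
      LMBM p.1 p.2 := by
  refine continuous_iff_continuousAt.2 fun p ↦ tendsto_iff_dist_tendsto_zero.2 ?_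
  refine squeeze_zero (fun _ ↦ dist_nonneg) (fun q ↦ abs_LMBM_sub_LMBM_le q.1 p.1 q.2 p.2) ?_
  have hcont : Continuous fun q : (Fin N₁ → EuclideanSpace ℝ (Fin d)) ×
      (Fin N₂ → EuclideanSpace ℝ (Fin d)) ↦
      ∑ i, dist (q.1 i) (p.1 i) + ∑ j, dist (q.2 j) (p.2 j) := by fun_prop
  simpa using hcont.tendsto p

lemma hasBoundedDifferencesOn_LMBM {s : Set (EuclideanSpace ℝ (Fin d))} {c : ℝ≥0}
    (hs : ∀ x ∈ s, ∀ y ∈ s, nndist x y ≤ c) :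
    HasBoundedDifferencesOn (fun z : Fin N₁ ⊕ Fin N₂ → EuclideanSpace ℝ (Fin d) ↦
      LMBM (fun i ↦ z (Sum.inl i)) (fun j ↦ z (Sum.inr j))) (fun _ ↦ s) (fun _ ↦ c) := by
  intro z hz k x hx
  set z' := Function.update z k x with hz'
  calc |LMBM (fun i ↦ z' (Sum.inl i)) (fun j ↦ z' (Sum.inr j))
        - LMBM (fun i ↦ z (Sum.inl i)) (fun j ↦ z (Sum.inr j))|
      ≤ ∑ i, dist (z' (Sum.inl i)) (z (Sum.inl i)) + ∑ j, dist (z' (Sum.inr j)) (z (Sum.inr j)) :=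
        abs_LMBM_sub_LMBM_le _ _ _ _
    _ = ∑ k', dist (z' k') (z k') :=
        (Fintype.sum_sum_type fun k' ↦ dist (z' k') (z k')).symm
    _ = dist x (z k) := by
        rw [Fintype.sum_eq_single k fun k' hk' ↦ by simp [hz', hk'], hz', Function.update_self]
    _ ≤ c := hs x hx (z k) (hz k trivial)

lemma hasSubgaussianMGF_LMBM {Ω : Type*} [MeasurableSpace Ω] {P : Measure Ω}
    {X : Fin N₁ → Ω → EuclideanSpace ℝ (Fin d)} {Y : Fin N₂ → Ω → EuclideanSpace ℝ (Fin d)}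
    {s : Set (EuclideanSpace ℝ (Fin d))} {c : ℝ≥0} (hs : ∀ x ∈ s, ∀ y ∈ s, nndist x y ≤ c)
    (hmeas : ∀ k, AEMeasurable (Sum.elim X Y k) P) (hindep : iIndepFun (Sum.elim X Y) P)
    (hmem : ∀ k, ∀ᵐ x ∂P.map (Sum.elim X Y k), x ∈ s) :
    HasSubgaussianMGF (fun ω ↦ LMBM (fun i ↦ X i ω) (fun j ↦ Y j ω)
      - ∫ ω', LMBM (fun i ↦ X i ω') (fun j ↦ Y j ω') ∂P) ((N₁ + N₂) * (c / 2) ^ 2) P := by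
  have hLMBM_meas : Measurable fun z : Fin N₁ ⊕ Fin N₂ → EuclideanSpace ℝ (Fin d) ↦
      LMBM (fun i ↦ z (Sum.inl i)) (fun j ↦ z (Sum.inr j)) :=
    continuous_LMBM.measurable.comp (f := fun z : Fin N₁ ⊕ Fin N₂ → EuclideanSpace ℝ (Fin d) ↦
      ((fun i ↦ z (Sum.inl i)), fun j ↦ z (Sum.inr j))) (by fun_prop)
  have h := (hasBoundedDifferencesOn_LMBM hs).hasSubgaussianMGF_of_iIndepFun hLMBM_meas
    hindep hmeas hmem
  simpa using h

end Matching

section AlmostSureConvergence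

open scoped NNReal Topology

variable {Ω : Type*} [MeasurableSpace Ω] {P : Measure Ω}

lemma measureReal_le_abs_le_of_hasSubgaussianMGF {X : Ω → ℝ} {c : ℝ≥0}
    (h : HasSubgaussianMGF X c P) {ε : ℝ} (hε : 0 ≤ ε) :
    P.real {ω | ε ≤ |X ω|} ≤ 2 * Real.exp (-ε ^ 2 / (2 * c)) := by
  have hunion : {ω | ε ≤ |X ω|} = {ω | ε ≤ X ω} ∪ {ω | ε ≤ (-X) ω} := by
    ext ω
    simp [le_abs]
  rw [hunion, two_mul]
  exact (measureReal_union_le _ _).trans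
    (add_le_add (h.measure_ge_le hε) (h.neg.measure_ge_le hε))

lemma ae_tendsto_zero_of_tsum_measure_ne_top {E : Type*} [SeminormedAddGroup E] {W : ℕ → Ω → E}
    (h : ∀ ε > 0, ∑' n, P {ω | ε ≤ ‖W n ω‖} ≠ ⊤) :
    ∀ᵐ ω ∂P, Tendsto (fun n ↦ W n ω) atTop (𝓝 0) := by
  have hsmall : ∀ᵐ ω ∂P, ∀ k : ℕ, ∀ᶠ n in atTop, ‖W n ω‖ < 1 / ((k : ℝ) + 1) := by
    refine ae_all_iff.2 fun k ↦ ?_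
    filter_upwards [ae_eventually_notMem (h (1 / ((k : ℝ) + 1)) (by positivity))] with ω hω
    simpa using hω
  filter_upwards [hsmall] with ω hω
  refine NormedAddGroup.tendsto_nhds_zero.2 fun ε hε ↦ ?_
  obtain ⟨k, hk⟩ := exists_nat_one_div_lt hε
  exact (hω k).mono fun n hn ↦ hn.trans hk

lemma summable_exp_neg_mul_rpow {a p : ℝ} (ha : 0 < a) (hp : 0 < p) :
    Summable fun n : ℕ ↦ Real.exp (-a * (n : ℝ) ^ p) := by
  have hexp := (isLittleO_exp_neg_mul_rpow_atTop ha (-2 / p)).comp_tendsto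
    ((tendsto_rpow_atTop hp).comp tendsto_natCast_atTop_atTop)
  refine summable_of_isBigO_nat (Real.summable_nat_rpow.2 (by norm_num : (-2 : ℝ) < -1))
    (hexp.isBigO.congr (fun _ ↦ rfl) fun n ↦ ?_)
  simp only [Function.comp_apply]
  rw [← Real.rpow_mul n.cast_nonneg, mul_div_cancel₀ _ hp.ne']

lemma measureReal_le_norm_div_rpow_le_of_hasSubgaussianMGF {X : Ω → ℝ} {K : ℝ≥0} {α ε : ℝ}
    {n : ℕ} (hn : n ≠ 0) (h : HasSubgaussianMGF X (n * K) P) (hε : 0 ≤ ε) :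
    P.real {ω | ε ≤ ‖X ω / (n : ℝ) ^ α‖}
      ≤ 2 * Real.exp (-(ε ^ 2 / (2 * K)) * (n : ℝ) ^ (2 * α - 1)) := by
  have hn_pos : (0 : ℝ) < n := by positivity
  have hset : {ω | ε ≤ ‖X ω / (n : ℝ) ^ α‖} = {ω | ε * (n : ℝ) ^ α ≤ |X ω|} := by
    ext ω
    simp only [Set.mem_ofPred_eq, norm_div, Real.norm_eq_abs]
    rw [abs_of_pos (by positivity : (0 : ℝ) < (n : ℝ) ^ α), le_div_iff₀ (by positivity)]
  have hexponent : -(ε * (n : ℝ) ^ α) ^ 2 / (2 * ((n * K : ℝ≥0) : ℝ))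
      = -(ε ^ 2 / (2 * K)) * (n : ℝ) ^ (2 * α - 1) := by
    rw [Real.rpow_sub_one hn_pos.ne', two_mul α, Real.rpow_add hn_pos]
    push_cast
    field_simp
  rw [hset, ← hexponent]
  exact measureReal_le_abs_le_of_hasSubgaussianMGF h (by positivity)

theorem ae_tendsto_div_rpow_zero_of_hasSubgaussianMGF {W : ℕ → Ω → ℝ} {K : ℝ≥0} {α : ℝ}
    (hα : 1 / 2 < α) (hW : ∀ n, HasSubgaussianMGF (W n) (n * K) P) :
    ∀ᵐ ω ∂P, Tendsto (fun n ↦ W n ω / (n : ℝ) ^ α) atTop (𝓝 0) := by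
  rcases eq_zero_or_pos K with rfl | hK
  · have hzero (n : ℕ) : W n =ᵐ[P] 0 :=
      HasSubgaussianMGF.ae_eq_zero_of_hasSubgaussianMGF_zero (by simpa using hW n)
    filter_upwards [ae_all_iff.2 hzero] with ω hω
    simp [hω]
  have hfin : IsFiniteMeasure P := by
    simpa [integrable_const_iff] using (hW 0).integrable_exp_mul 0
  refine ae_tendsto_zero_of_tsum_measure_ne_top fun ε hε ↦ ?_
  have hsum : Summable fun n : ℕ ↦
      2 * Real.exp (-(ε ^ 2 / (2 * K)) * (n : ℝ) ^ (2 * α - 1)) :=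
    (summable_exp_neg_mul_rpow (by positivity) (by linarith)).mul_left 2
  refine ne_top_of_le_ne_top hsum.tsum_ofReal_ne_top (ENNReal.tsum_le_tsum fun n ↦ ?_)
  rcases eq_or_ne n 0 with rfl | hn
  · simp [Real.zero_rpow (by linarith : α ≠ 0), hε.not_ge]
  · rw [← ofReal_measureReal]
    exact ENNReal.ofReal_le_ofReal
      (measureReal_le_norm_div_rpow_le_of_hasSubgaussianMGF hn (hW n) hε.le)

end AlmostSureConvergence

section UnitCube

variable {d : ℕ}

lemma isBounded_unitCube : Bornology.IsBounded (unitCube d) := by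
  refine ((PiLp.antilipschitzWith_ofLp 2 fun _ : Fin d ↦ ℝ).isBounded_preimage
    (Metric.isBounded_Icc 0 1)).subset fun x hx ↦ ?_
  exact ⟨fun i ↦ (hx i).1, fun i ↦ (hx i).2⟩

lemma measurableSet_unitCube : MeasurableSet (unitCube d) := by
  have hcube : unitCube d = ⋂ i, (fun x ↦ x i) ⁻¹' Set.Icc 0 1 := by
    ext x
    simp [unitCube]
  rw [hcube]
  exact .iInter fun i ↦ measurableSet_Icc.preimage (by fun_prop)

lemma ae_unifCube_mem_unitCube : ∀ᵐ x ∂unifCube d, x ∈ unitCube d :=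
  ae_restrict_mem measurableSet_unitCube

end UnitCube

lemma half_lt_one_sub_one_div {d : ℕ} (hd : 3 ≤ d) : 1 / 2 < 1 - 1 / (d : ℝ) := by
  have hd' : (3 : ℝ) ≤ d := mod_cast hd
  have hinv := one_div_le_one_div_of_le (by norm_num) hd'
  linarith

theorem as_convergence_of_mean_convergence_MBM_general {d : ℕ} {Ω : Type*} [MeasurableSpace Ω]
    {P : Measure Ω} {X Y : ℕ → Ω → EuclideanSpace ℝ (Fin d)} {s : Set (EuclideanSpace ℝ (Fin d))}
    (hs : Bornology.IsBounded s) (hmeas : ∀ n, AEMeasurable (Sum.elim X Y n) P)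
    (hindep : iIndepFun (Sum.elim X Y) P) (hmem : ∀ n, ∀ᵐ x ∂P.map (Sum.elim X Y n), x ∈ s)
    {α β : ℝ} (hα : 1 / 2 < α)
    (hmean : Tendsto (fun N : ℕ ↦
      (∫ ω, LMBM (fun i : Fin N ↦ X i ω) (fun j : Fin N ↦ Y j ω) ∂P) / (N : ℝ) ^ α)
      atTop (nhds β)) :
    ∀ᵐ ω ∂P, Tendsto
      (fun N : ℕ ↦ LMBM (fun i : Fin N ↦ X i ω) (fun j : Fin N ↦ Y j ω) / (N : ℝ) ^ α)
      atTop (nhds β) := by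
  obtain ⟨C, hC⟩ := Metric.isBounded_iff_nndist.1 hs
  have hsubg (N : ℕ) : HasSubgaussianMGF
      (fun ω ↦ LMBM (fun i : Fin N ↦ X i ω) (fun j : Fin N ↦ Y j ω)
        - ∫ ω', LMBM (fun i : Fin N ↦ X i ω') (fun j : Fin N ↦ Y j ω') ∂P)
      (N * (2 * (C / 2) ^ 2)) P := by
    let e : Fin N ⊕ Fin N → ℕ ⊕ ℕ := Sum.map Fin.val Fin.val
    have he : Function.Injective e := Fin.val_injective.sumMap Fin.val_injective
    have helim : Sum.elim (fun i : Fin N ↦ X i) (fun j : Fin N ↦ Y j)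
        = fun k ↦ Sum.elim X Y (e k) := Sum.elim_comp_map.symm
    rw [← mul_assoc, mul_two]
    apply hasSubgaussianMGF_LMBM (fun x hx y hy ↦ hC hx hy) <;> rw [helim]
    · exact fun k ↦ hmeas (e k)
    · exact hindep.precomp he
    · exact fun k ↦ hmem (e k)
  filter_upwards [ae_tendsto_div_rpow_zero_of_hasSubgaussianMGF hα hsubg] with ω hω
  simpa [← add_div] using hω.add hmean

theorem as_convergence_of_mean_convergence_MBM
    (d : ℕ) (hd : 3 ≤ d)
    (Ω : Type*) [MeasureSpace Ω] [IsProbabilityMeasure (ℙ : Measure Ω)]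
    (X Y : ℕ → Ω → EuclideanSpace ℝ (Fin d))
    (hmeas : ∀ n, Measurable (Sum.elim X Y n))
    (hindep : iIndepFun (Sum.elim X Y) ℙ)
    (hunif : ∀ n, Measure.map (Sum.elim X Y n) ℙ = unifCube d)
    (β : ℝ)
    (hmean : Tendsto
      (fun N : ℕ =>
        (∫ ω, LMBM (fun i : Fin N => X i ω) (fun j : Fin N => Y j ω) ∂ℙ) /
          (N : ℝ) ^ (1 - 1 / (d : ℝ)))
      atTop (nhds β)) :
    ∀ᵐ ω ∂(ℙ : Measure Ω),
      Tendsto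
        (fun N : ℕ =>
          LMBM (fun i : Fin N => X i ω) (fun j : Fin N => Y j ω) /
            (N : ℝ) ^ (1 - 1 / (d : ℝ)))
        atTop (nhds β) :=
  as_convergence_of_mean_convergence_MBM_general isBounded_unitCube
    (fun n ↦ (hmeas n).aemeasurable) hindep (fun n ↦ hunif n ▸ ae_unifCube_mem_unitCube)
    (half_lt_one_sub_one_div hd) hmean
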